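/- Let (Ω,Σ,ν) be a complete probability space, X, Y real Banach spaces, and T : X → Y a semi-embedding. Let f : Ω → X be a function for which there is a constant c > 0 such that for each y* ∈ Y* one has |y*(T(f(ω)))| ≤ c‖T*(y*)‖ for ν-almost every ω ∈ Ω (the exceptional set depending on y*). If T ∘ f : Ω → Y is Pettis integrable, then f is T*(Y*)-integrable: for every A ∈ Σ there exists a vector m(A) ∈ X such that y*(T(m(A))) = ∫_A y*(T(f(ω))) dν(ω) for all y* ∈ Y*. -/

import Mathlib

open MeasureTheory Filter Topology

/-- `T` is a semi-embedding: an injective bounded linear operator mapping the closed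
unit ball onto a norm-closed set. -/
def SemiEmbedding {X Y : Type*} [NormedAddCommGroup X] [NormedSpace ℝ X]
    [NormedAddCommGroup Y] [NormedSpace ℝ Y] (T : X →L[ℝ] Y) : Prop :=
  Function.Injective T ∧ IsClosed (T '' Metric.closedBall 0 1)

/-- `g` is Pettis integrable with respect to `ν`. -/
def PettisIntegrable {Ω Y : Type*} [MeasurableSpace Ω]
    [NormedAddCommGroup Y] [NormedSpace ℝ Y]
    (ν : Measure Ω) (g : Ω → Y) : Prop :=
  (∀ ψ : Y →L[ℝ] ℝ, Integrable (fun ω => ψ (g ω)) ν) ∧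
  ∀ A : Set Ω, MeasurableSet A → ∃ m : Y, ∀ ψ : Y →L[ℝ] ℝ, ψ m = ∫ ω in A, ψ (g ω) ∂ν

/-- If `T : X → Y` is a semi-embedding, `f : Ω → X` satisfies
`|⟨T*(y*), f⟩| ≤ c‖T*(y*)‖` a.e. for each `y*`, and `T ∘ f` is Pettis integrable,
then `f` is `T*(Y*)`-integrable. -/
theorem TstarYstar_integrable_of_semiEmbedding
    {Ω X Y : Type*} [MeasurableSpace Ω]
    [NormedAddCommGroup X] [NormedSpace ℝ X] [CompleteSpace X]
    [NormedAddCommGroup Y] [NormedSpace ℝ Y] [CompleteSpace Y]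
    (ν : Measure Ω) [IsProbabilityMeasure ν] [ν.IsComplete]
    (T : X →L[ℝ] Y) (hT : SemiEmbedding T)
    (f : Ω → X) (c : ℝ) (hc : 0 < c)
    (hbound : ∀ ψ : Y →L[ℝ] ℝ, ∀ᵐ ω ∂ν, |ψ (T (f ω))| ≤ c * ‖ψ.comp T‖)
    (hPettis : PettisIntegrable ν (fun ω => T (f ω))) :
    ∀ A : Set Ω, MeasurableSet A →
      ∃ m : X, ∀ ψ : Y →L[ℝ] ℝ, ψ (T m) = ∫ ω in A, ψ (T (f ω)) ∂ν := by
  intro A hA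
  obtain ⟨m, hm⟩ := hPettis.2 A hA
  have key : ∀ ψ : Y →L[ℝ] ℝ, |ψ m| ≤ c * ‖ψ.comp T‖ := by
    intro ψ
    rw [hm ψ, ← Real.norm_eq_abs]
    have h1 : ‖∫ ω in A, ψ (T (f ω)) ∂ν‖ ≤ (c * ‖ψ.comp T‖) * (ν.restrict A).real Set.univ := by
      apply norm_integral_le_of_norm_le_const
      exact ae_restrict_of_ae (hbound ψ)
    have h2 : (ν.restrict A).real Set.univ ≤ 1 := by
      rw [measureReal_restrict_apply MeasurableSet.univ]
      exact measureReal_le_one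
    exact h1.trans (mul_le_of_le_one_right (by positivity) h2)
  have hmem : c⁻¹ • m ∈ T '' Metric.closedBall 0 1 := by
    by_contra hn
    have hconv : Convex ℝ (T '' Metric.closedBall (0 : X) 1) :=
      (convex_closedBall (0 : X) 1).linear_image T.toLinearMap
    obtain ⟨ψ, u, h1, h2⟩ := geometric_hahn_banach_closed_point hconv hT.2 hn
    have hb : ∀ x : X, ‖x‖ ≤ 1 → ψ (T x) < u := fun x hx =>
      h1 _ ⟨x, by simpa using hx, rfl⟩
    have hu : 0 < u := by simpa using hb 0 (by simp)
    have hnorm : ‖ψ.comp T‖ ≤ u := by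
      refine ContinuousLinearMap.opNorm_le_of_unit_norm hu.le ?_
      intro x hx
      have e1 := hb x hx.le
      have e2 := hb (-x) (by rw [norm_neg]; exact hx.le)
      simp only [map_neg] at e2
      rw [Real.norm_eq_abs, ContinuousLinearMap.comp_apply, abs_le]
      constructor <;> linarith
    have h3 : ψ m ≤ c * u :=
      (le_abs_self _).trans ((key ψ).trans (mul_le_mul_of_nonneg_left hnorm hc.le))
    rw [map_smul, smul_eq_mul, lt_inv_mul_iff₀ hc] at h2
    linarith
  obtain ⟨x, -, hx⟩ := hmem
  refine ⟨c • x, fun ψ => ?_⟩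
  rw [← hm ψ, map_smul, hx, smul_inv_smul₀ hc.ne']
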